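/- Let Δ be the bicyclic graph built as follows: take two vertices t and r joined by three internally disjoint paths S₁: t–a₁–a₂–a₃–r, S₂: t–b₁–b₂–b₃–r, and S₃ of length ℓ ≥ 1 with no trees attached at its internal vertices; attach a rooted tree T_i at a_i and a rooted tree Λ_i at b_i for i = 1, 2, 3, a rooted tree Υ at t and a rooted tree Θ at r. Assume T_i ≅ Λ_i as rooted trees for each i, that Υ is not isomorphic to Θ as a rooted tree, and that ℓ ≠ 4 or at least one T_i has more than one vertex. Set G_i = Aut(T_i)_{root}, H = Aut(Υ)_{root}, K = Aut(Θ)_{root}. Then Aut(Δ) ≅ H × K × ((G₁ × G₂ × G₃) ≀ Z₂). -/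

import Mathlib

open SimpleGraph

/-- The stabilizer `Aut(G)_v = {f ∈ Aut(G) : f(v) = v}` of a vertex `v` in the automorphism
group of a graph `G`. -/
def autStab {V : Type} (G : SimpleGraph V) (v : V) : Subgroup (G ≃g G) where
  carrier := {f | f v = v}
  one_mem' := rfl
  mul_mem' := by
    intro f g hf hg
    simp only [Set.mem_setOf_eq] at *
    show f (g v) = v
    rw [hg, hf]
  inv_mem' := by
    intro f hf
    simp only [Set.mem_setOf_eq] at *
    calc f⁻¹ v = f⁻¹ (f v) := by rw [hf]
    _ = v := RelIso.inv_apply_self f v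

/-- The swap action of `Z₂` on `G × G`. -/
def swapHom (G : Type) [Group G] : Multiplicative (ZMod 2) →* MulAut (G × G) where
  toFun g := if Multiplicative.toAdd g = 1 then (MulEquiv.prodComm : G × G ≃* G × G) else 1
  map_one' := by
    show (if (0 : ZMod 2) = 1 then (MulEquiv.prodComm : G × G ≃* G × G) else 1) = 1
    norm_num
  map_mul' x y := by
    have h2 : ∀ z : ZMod 2, z = 0 ∨ z = 1 := by decide
    have hs : (MulEquiv.prodComm : G × G ≃* G × G) * MulEquiv.prodComm = 1 := by
      ext z <;> rfl
    show (if Multiplicative.toAdd x + Multiplicative.toAdd y = 1 then _ else _) = _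
    rcases h2 (Multiplicative.toAdd x) with hx | hx <;>
      rcases h2 (Multiplicative.toAdd y) with hy | hy <;>
        simp [hx, hy, hs, show (1 + 1 : ZMod 2) = 0 from rfl,
          show (0 : ZMod 2) ≠ 1 by decide, show (1 : ZMod 2) ≠ 0 by decide]

/-- The wreath product `G ≀ Z₂ = (G × G) ⋊ Z₂`, where the nontrivial element of `Z₂`
swaps the two coordinates. -/
def wreathZ2 (G : Type) [Group G] : Type :=
  (G × G) ⋊[swapHom G] Multiplicative (ZMod 2)

instance (G : Type) [Group G] : Group (wreathZ2 G) :=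
  inferInstanceAs (Group ((G × G) ⋊[swapHom G] Multiplicative (ZMod 2)))

/-- The graph obtained from `base` by attaching, for each `i : ι`, the rooted tree
`(T i, t i)` at the vertex `x i` (identifying the root `t i` with `x i`); the attached trees
are pairwise disjoint and disjoint from `base` except at the attachment vertices. -/
def attachTrees {B : Type} (base : SimpleGraph B) {ι : Type} {W : ι → Type}
    (T : ∀ i, SimpleGraph (W i)) (t : ∀ i, W i) (x : ι → B) :
    SimpleGraph (B ⊕ Σ i, {w : W i // w ≠ t i}) where
  Adj a b :=
    match a, b with
    | .inl a, .inl b => base.Adj a b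
    | .inl a, .inr ⟨i, w⟩ => a = x i ∧ (T i).Adj (t i) w.1
    | .inr ⟨i, w⟩, .inl b => b = x i ∧ (T i).Adj (t i) w.1
    | .inr ⟨i, w⟩, .inr ⟨j, w'⟩ => ∃ h : i = j, (T j).Adj (h ▸ w).1 w'.1
  symm := by
    refine ⟨?_⟩
    rintro (a | ⟨i, w⟩) (b | ⟨j, w'⟩) h
    · exact base.adj_symm h
    · exact h
    · exact h
    · obtain ⟨rfl, hw⟩ := h
      exact ⟨rfl, (T i).adj_symm hw⟩
  loopless := by
    refine ⟨?_⟩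
    rintro (a | ⟨i, w⟩) h
    · exact base.loopless.irrefl a h
    · obtain ⟨h', hw⟩ := h
      exact (T i).loopless.irrefl _ hw

/-- Vertices of a theta graph: two hub vertices `u`, `v` joined by three internally disjoint
paths having `p`, `q` and `r` internal vertices respectively. -/
inductive ThetaV (p q r : ℕ) : Type where
  | u : ThetaV p q r
  | v : ThetaV p q r
  | x1 : Fin p → ThetaV p q r
  | x2 : Fin q → ThetaV p q r
  | x3 : Fin r → ThetaV p q r
  deriving DecidableEq

/-- The theta graph: the vertices `u` and `v` joined by three internally disjoint paths of
lengths `p + 1`, `q + 1` and `r + 1`; the internal vertices of each path are indexed starting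
from the end adjacent to `v`. -/
def theta (p q r : ℕ) : SimpleGraph (ThetaV p q r) where
  Adj a b :=
    match a, b with
    | .u, .v => p = 0 ∨ q = 0 ∨ r = 0
    | .v, .u => p = 0 ∨ q = 0 ∨ r = 0
    | .v, .x1 i => i.val = 0
    | .x1 i, .v => i.val = 0
    | .u, .x1 i => i.val = p - 1
    | .x1 i, .u => i.val = p - 1
    | .v, .x2 i => i.val = 0
    | .x2 i, .v => i.val = 0
    | .u, .x2 i => i.val = q - 1
    | .x2 i, .u => i.val = q - 1
    | .v, .x3 i => i.val = 0
    | .x3 i, .v => i.val = 0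
    | .u, .x3 i => i.val = r - 1
    | .x3 i, .u => i.val = r - 1
    | .x1 i, .x1 j => i.val + 1 = j.val ∨ j.val + 1 = i.val
    | .x2 i, .x2 j => i.val + 1 = j.val ∨ j.val + 1 = i.val
    | .x3 i, .x3 j => i.val + 1 = j.val ∨ j.val + 1 = i.val
    | _, _ => False
  symm := by
    refine ⟨?_⟩
    intro a b h
    cases a <;> cases b <;> simp only [] at h ⊢ <;> tauto
  loopless := by
    refine ⟨?_⟩
    intro a h
    cases a <;> simp only [] at h <;> omega

/-- Index type for the trees attached in Lemma 2.6: `T₁, T₂, T₃` on the first path,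
`Λ₁, Λ₂, Λ₃` on the second path, and `Υ`, `Θ` at the hub vertices `t`, `r`. -/
abbrev Stmt6Index : Type := (Fin 3 ⊕ Fin 3) ⊕ (Unit ⊕ Unit)

/-- The family of vertex types of the attached trees. -/
def stmt6W (WT WΛ : Fin 3 → Type) (WΥ WΘ : Type) : Stmt6Index → Type :=
  Sum.elim (Sum.elim WT WΛ) (Sum.elim (fun _ => WΥ) (fun _ => WΘ))

/-- The family of attached trees. -/
def stmt6T {WT WΛ : Fin 3 → Type} {WΥ WΘ : Type}
    (TT : ∀ j, SimpleGraph (WT j)) (TΛ : ∀ j, SimpleGraph (WΛ j))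
    (TΥ : SimpleGraph WΥ) (TΘ : SimpleGraph WΘ) :
    ∀ i, SimpleGraph (stmt6W WT WΛ WΥ WΘ i) :=
  fun i =>
    match i with
    | .inl (.inl j) => TT j
    | .inl (.inr j) => TΛ j
    | .inr (.inl _) => TΥ
    | .inr (.inr _) => TΘ

/-- The family of roots of the attached trees. -/
def stmt6root {WT WΛ : Fin 3 → Type} {WΥ WΘ : Type}
    (tT : ∀ j, WT j) (tΛ : ∀ j, WΛ j) (tΥ : WΥ) (tΘ : WΘ) :
    ∀ i, stmt6W WT WΛ WΥ WΘ i :=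
  fun i =>
    match i with
    | .inl (.inl j) => tT j
    | .inl (.inr j) => tΛ j
    | .inr (.inl _) => tΥ
    | .inr (.inr _) => tΘ

/-- Attachment vertices on the theta graph with hub vertices `t = v` and `r = u`, paths
`S₁ : t–a₁–a₂–a₃–r`, `S₂ : t–b₁–b₂–b₃–r` and `S₃` of length `m + 1`: the tree `T_j` is
attached at `a_j`, `Λ_j` at `b_j`, `Υ` at `t` and `Θ` at `r`. -/
def stmt6x (m : ℕ) : Stmt6Index → ThetaV 3 3 m :=
  fun i =>
    match i with
    | .inl (.inl j) => ThetaV.x1 j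
    | .inl (.inr j) => ThetaV.x2 j
    | .inr (.inl _) => ThetaV.v
    | .inr (.inr _) => ThetaV.u

/-- The bicyclic graph of Lemma 2.6. -/
def stmt6Graph (m : ℕ) {WT WΛ : Fin 3 → Type} {WΥ WΘ : Type}
    (TT : ∀ j, SimpleGraph (WT j)) (TΛ : ∀ j, SimpleGraph (WΛ j))
    (TΥ : SimpleGraph WΥ) (TΘ : SimpleGraph WΘ)
    (tT : ∀ j, WT j) (tΛ : ∀ j, WΛ j) (tΥ : WΥ) (tΘ : WΘ) :=
  attachTrees (theta 3 3 m) (stmt6T TT TΛ TΥ TΘ) (stmt6root tT tΛ tΥ tΘ) (stmt6x m)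

/-!
An automorphism maps the theta core to itself: in the image of the core, every vertex has two
neighbors, but a vertex of this image farthest from the root inside an attached tree has only its
parent to offer. So each automorphism covers an automorphism of the core and carries attached trees
to isomorphic attached trees. The hubs are the vertices of degree three in the core, and `Υ ≇ Θ`
prevents them from being exchanged. An automorphism of the core fixing both hubs permutes the three
paths, preserving their lengths, and it cannot move the third path, which either has a different
length or carries no trees where the other two do. It is therefore trivial or exchanges the first
two paths. The automorphisms over the identity form the product of the rooted automorphism groups
of the trees, and the involution exchanging the two decorated paths swaps two of its factors, which
gives the wreath product.
-/

section Graphs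

variable {V W : Type*} {G : SimpleGraph V} {H : SimpleGraph W}

theorem eq_of_adj_of_dist_le_dist (hG : G.IsTree) (r : V) {w a b : V} (ha : G.Adj a w)
    (hb : G.Adj b w) (hda : G.dist r a ≤ G.dist r w) (hdb : G.dist r b ≤ G.dist r w) :
    a = b := by
  have exists_path_via : ∀ c, (hc : G.Adj c w) → G.dist r c ≤ G.dist r w →
      ∃ p : G.Walk r c, (p.concat hc).IsPath := by
    intro c hc hdc
    obtain ⟨p, -, hp⟩ := hG.connected.exists_path_of_dist r c
    have hdist := hG.dist_eq_dist_add_one_of_adj r hc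
    exact ⟨p, Walk.isPath_of_length_eq_dist _ (by rw [Walk.length_concat]; lia)⟩
  obtain ⟨p, hp⟩ := exists_path_via a ha hda
  obtain ⟨q, hq⟩ := exists_path_via b hb hdb
  have hpq := (hG.isAcyclic.subsingleton_path r w).elim ⟨_, hp⟩ ⟨_, hq⟩
  exact (Walk.concat_inj (Subtype.mk.inj hpq)).1

/-- The graph isomorphism given by two mutually inverse homomorphisms. -/
def isoOfHom (f : G →g H) (g : H →g G) (hgf : Function.LeftInverse g f)
    (hfg : Function.RightInverse g f) : G ≃g H where
  toFun := f
  invFun := g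
  left_inv := hgf
  right_inv := hfg
  map_rel_iff' {a b} :=
    ⟨fun h ↦ by simpa only [Equiv.coe_fn_mk, hgf a, hgf b] using g.map_adj h, f.map_adj⟩

/-- Isomorphic graphs have isomorphic automorphism groups, by conjugation. -/
def autCongr (e : G ≃g H) : (G ≃g G) ≃* (H ≃g H) where
  toEquiv := RelIso.relIsoCongr e e
  map_mul' f g := RelIso.ext fun z ↦ by simp [RelIso.relIsoCongr_apply, RelIso.mul_apply]

theorem ncard_neighborSet_apply (φ : G ≃g H) (b : V) :
    (H.neighborSet (φ b)).ncard = (G.neighborSet b).ncard :=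
  (Set.ncard_congr' (φ.mapNeighborSet b)).symm

theorem apply_eq_of_adj_succ (f : G →g H) (hf : Function.Injective f) {s : ℕ → V} {t : ℕ → W}
    {n : ℕ} (hs : ∀ k ≤ n, G.Adj (s k) (s (k + 1))) (hs' : ∀ k < n, s k ≠ s (k + 2))
    (ht : ∀ k < n, ∀ z, H.Adj (t (k + 1)) z → z = t k ∨ z = t (k + 2))
    (h0 : f (s 0) = t 0) (h1 : f (s 1) = t 1) {k : ℕ} (hk : k ≤ n + 1) : f (s k) = t k := by
  induction k using Nat.twoStepInduction with
  | zero => exact h0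
  | one => exact h1
  | more k ih ih' =>
    have hadj : H.Adj (t (k + 1)) (f (s (k + 2))) :=
      ih' (by lia) ▸ f.map_adj (hs (k + 1) (by lia))
    refine (ht k (by lia) _ hadj).resolve_left fun hback ↦ hs' k (by lia) ?_
    exact hf ((ih (by lia)).trans hback.symm)

end Graphs

/-- A graph with a distinguished root. -/
structure RootedGraph where
  V : Type
  graph : SimpleGraph V
  root : V

namespace RootedGraph

/-- The group of automorphisms fixing the root. -/
abbrev Aut (R : RootedGraph) : Type := ↥(autStab R.graph R.root)

/-- Isomorphisms of rooted graphs: graph isomorphisms carrying root to root. -/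
abbrev Iso (R S : RootedGraph) : Type := {e : R.graph ≃g S.graph // e R.root = S.root}

/-- The rooted graph with a single vertex; attaching it changes nothing. -/
abbrev point : RootedGraph := ⟨Unit, ⊥, ()⟩

end RootedGraph

/-- Adjacency in the rooted product: the edges of the rooted graphs `R b`, together with the
edges of `base` placed between the roots. -/
inductive RootedProductAdj {B : Type*} (base : SimpleGraph B) (R : B → RootedGraph) :
    (Σ b, (R b).V) → (Σ b, (R b).V) → Prop
  | fiber {b : B} {w w' : (R b).V} (h : (R b).graph.Adj w w') :
    RootedProductAdj base R ⟨b, w⟩ ⟨b, w'⟩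
  | base {b b' : B} (h : base.Adj b b') :
    RootedProductAdj base R ⟨b, (R b).root⟩ ⟨b', (R b').root⟩

/-- The rooted product: `base` with the rooted graph `R b` attached at each vertex `b`. Unlike
`attachTrees`, it treats roots and other vertices of `R b` alike, as the fiber over `b`. -/
def rootedProduct {B : Type*} (base : SimpleGraph B) (R : B → RootedGraph) :
    SimpleGraph (Σ b, (R b).V) where
  Adj := RootedProductAdj base R
  symm := ⟨fun _ _ h ↦ by
    cases h with
    | fiber h => exact .fiber h.symm
    | base h => exact .base h.symm⟩
  loopless := ⟨fun ⟨b, w⟩ h ↦ by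
    cases h with
    | fiber h => exact (R b).graph.loopless.irrefl _ h
    | base h => exact base.loopless.irrefl _ h⟩

namespace rootedProduct

variable {B : Type*} {base : SimpleGraph B} {R : B → RootedGraph}

theorem adj_mk_mk_same {b : B} {w w' : (R b).V} :
    (rootedProduct base R).Adj ⟨b, w⟩ ⟨b, w'⟩ ↔ (R b).graph.Adj w w' := by
  refine ⟨fun h ↦ ?_, .fiber⟩
  cases h with
  | fiber h => exact h
  | base h => exact absurd h (base.loopless.irrefl _)

theorem adj_mk_mk_of_ne {b b' : B} (hb : b ≠ b') {w : (R b).V} {w' : (R b').V} :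
    (rootedProduct base R).Adj ⟨b, w⟩ ⟨b', w'⟩ ↔
      base.Adj b b' ∧ w = (R b).root ∧ w' = (R b').root := by
  refine ⟨fun h ↦ ?_, ?_⟩
  · cases h with
    | fiber h => exact absurd rfl hb
    | base h => exact ⟨h, rfl, rfl⟩
  · rintro ⟨h, rfl, rfl⟩
    exact .base h

theorem adj_root_root {b b' : B} :
    (rootedProduct base R).Adj ⟨b, (R b).root⟩ ⟨b', (R b').root⟩ ↔ base.Adj b b' := by
  refine ⟨fun h ↦ ?_, .base⟩
  by_cases hb : b = b'
  · subst hb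
    exact absurd h ((rootedProduct base R).loopless.irrefl _)
  · exact ((adj_mk_mk_of_ne hb).1 h).1

theorem exists_eq_mk_of_adj_of_ne_root {b : B} {w : (R b).V} (hw : w ≠ (R b).root)
    {z : Σ b, (R b).V} (h : (rootedProduct base R).Adj ⟨b, w⟩ z) :
    ∃ w', z = ⟨b, w'⟩ ∧ (R b).graph.Adj w w' := by
  cases h with
  | fiber h => exact ⟨_, rfl, h⟩
  | base h => exact absurd rfl hw

/-- The base, embedded as the roots. -/
def rootEmbedding (base : SimpleGraph B) (R : B → RootedGraph) :
    base ↪g rootedProduct base R where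
  toFun b := ⟨b, (R b).root⟩
  inj' _ _ h := congrArg Sigma.fst h
  map_rel_iff' := adj_root_root

/-- The homomorphism of rooted products over a homomorphism of the bases, given by rooted
homomorphisms of the fibers. -/
def mapHom {B' : Type*} {base' : SimpleGraph B'} {R' : B' → RootedGraph} (φ : base →g base')
    (g : ∀ b, (R b).graph →g (R' (φ b)).graph) (hg : ∀ b, g b (R b).root = (R' (φ b)).root) :
    rootedProduct base R →g rootedProduct base' R' where
  toFun := Sigma.map φ fun b ↦ g b
  map_rel' h := by
    cases h with
    | fiber h => exact .fiber ((g _).map_adj h)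
    | base h =>
      simp only [Sigma.map, hg]
      exact .base (φ.map_adj h)

/-- Rooted automorphisms of all fibers, acting simultaneously. -/
def fiberAut (base : SimpleGraph B) (R : B → RootedGraph) :
    (∀ b, (R b).Aut) →* (rootedProduct base R ≃g rootedProduct base R) where
  toFun g := isoOfHom (mapHom Hom.id (fun b ↦ (g b).1.toHom) fun b ↦ (g b).2)
    (mapHom Hom.id (fun b ↦ (g b)⁻¹.1.toHom) fun b ↦ (g b)⁻¹.2)
    (fun ⟨b, w⟩ ↦ congrArg (Sigma.mk b) (RelIso.inv_apply_self (g b).1 w))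
    (fun ⟨b, w⟩ ↦ congrArg (Sigma.mk b) (RelIso.apply_inv_self (g b).1 w))
  map_one' := rfl
  map_mul' _ _ := rfl

theorem fiberAut_injective : Function.Injective (fiberAut base R) := by
  refine fun g g' h ↦ funext fun b ↦ Subtype.ext (RelIso.ext fun w ↦ ?_)
  exact sigma_mk_injective (β := fun b ↦ (R b).V) (congrArg (fun f ↦ f ⟨b, w⟩) h)

/-- A vertex of the image farthest from the root of its fiber would have two neighbors in the
image, hence two parents. -/
theorem exists_eq_root_of_injective {C : Type*} [Finite C] {core : SimpleGraph C}
    (hcore : ∀ c, (core.neighborSet c).Nontrivial) (htree : ∀ b, (R b).graph.IsTree)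
    (f : core →g rootedProduct base R) (hf : Function.Injective f) (c₀ : C) :
    ∃ b, f c₀ = ⟨b, (R b).root⟩ := by
  obtain ⟨b, w₀, hw₀⟩ : ∃ b w, f c₀ = ⟨b, w⟩ := ⟨_, _, rfl⟩
  refine ⟨b, hw₀.trans ?_⟩
  by_contra hroot
  let S : Set (R b).V := {w | w ≠ (R b).root ∧ ∃ c, f c = ⟨b, w⟩}
  have hfinite : S.Finite :=
    ((Set.finite_range f).preimage sigma_mk_injective.injOn).subset fun _ hw ↦ hw.2
  obtain ⟨w, ⟨hw, c, hc⟩, hmax⟩ := Set.exists_max_image S ((R b).graph.dist (R b).root) hfinite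
    ⟨w₀, fun h ↦ hroot (h ▸ rfl), c₀, hw₀⟩
  have apply_neighbor : ∀ d, core.Adj c d → ∃ w', f d = ⟨b, w'⟩ ∧ (R b).graph.Adj w' w ∧
      (R b).graph.dist (R b).root w' ≤ (R b).graph.dist (R b).root w := by
    intro d hcd
    obtain ⟨w', hd, hadj⟩ := exists_eq_mk_of_adj_of_ne_root hw (hc ▸ f.map_adj hcd)
    refine ⟨w', hd, hadj.symm, ?_⟩
    by_cases hw' : w' = (R b).root
    · simp only [hw', dist_self, zero_le]
    · exact hmax w' ⟨hw', d, hd⟩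
  obtain ⟨d, hcd, e, hce, hde⟩ := hcore c
  obtain ⟨w₁, hd, hadj₁, hle₁⟩ := apply_neighbor d hcd
  obtain ⟨w₂, he, hadj₂, hle₂⟩ := apply_neighbor e hce
  obtain rfl := eq_of_adj_of_dist_le_dist (htree b) _ hadj₁ hadj₂ hle₁ hle₂
  exact hde (hf (hd.trans he.symm))

/-- `φ` is the automorphism of the base induced by `f`. -/
def Covers (f : rootedProduct base R ≃g rootedProduct base R) (φ : base ≃g base) : Prop :=
  ∀ b, f ⟨b, (R b).root⟩ = ⟨φ b, (R (φ b)).root⟩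

theorem exists_covers [Finite B] (hbase : ∀ b, (base.neighborSet b).Nontrivial)
    (htree : ∀ b, (R b).graph.IsTree) (f : rootedProduct base R ≃g rootedProduct base R) :
    ∃ φ : base ≃g base, Covers f φ := by
  have exists_eq_root : ∀ (h : rootedProduct base R ≃g rootedProduct base R) b,
      ∃ c, h ⟨b, (R b).root⟩ = ⟨c, (R c).root⟩ := fun h ↦
    exists_eq_root_of_injective hbase htree (h.toHom.comp (rootEmbedding base R).toHom)
      (h.injective.comp (rootEmbedding base R).injective)
  choose φ hφ using exists_eq_root f
  choose ψ hψ using exists_eq_root f.symm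
  refine ⟨⟨⟨φ, ψ, fun b ↦ ?_, fun b ↦ ?_⟩, fun {a b} ↦ ?_⟩, hφ⟩
  · exact (rootEmbedding base R).injective
      ((hψ (φ b)).symm.trans (f.symm_apply_eq.2 (hφ b).symm))
  · exact (rootEmbedding base R).injective
      ((hφ (ψ b)).symm.trans (f.symm_apply_eq.1 (hψ b)).symm)
  · rw [Equiv.coe_fn_mk, ← adj_root_root (R := R), ← hφ, ← hφ, f.map_adj_iff, adj_root_root]

namespace Covers

variable {f f' : rootedProduct base R ≃g rootedProduct base R} {φ φ' : base ≃g base}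

theorem mul (h : Covers f φ) (h' : Covers f' φ') : Covers (f * f') (φ * φ') := fun b ↦
  (congrArg f (h' b)).trans (h (φ' b))

theorem inv (h : Covers f φ) : Covers f⁻¹ φ⁻¹ := fun b ↦ by
  refine f.symm_apply_eq.2 ?_
  rw [h, RelIso.apply_inv_self]

theorem eq_root_of_apply_eq_root (h : Covers f φ) {b c : B} {w : (R b).V}
    (hw : f ⟨b, w⟩ = ⟨c, (R c).root⟩) : w = (R b).root := by
  have hinv : f⁻¹ ⟨c, (R c).root⟩ = ⟨b, w⟩ := f.symm_apply_eq.2 hw.symm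
  rw [h.inv c] at hinv
  obtain ⟨rfl, hw⟩ := Sigma.mk.inj hinv
  exact (eq_of_heq hw).symm

theorem fst_apply (h : Covers f φ) (hconn : ∀ b, (R b).graph.Preconnected) (b : B)
    (w : (R b).V) : (f ⟨b, w⟩).1 = φ b := by
  obtain ⟨p⟩ := hconn b w (R b).root
  generalize hr : (R b).root = r at p
  induction p with
  | nil => rw [← hr, h b]
  | @cons x y _ hxy _ ih =>
    by_cases hx : x = (R b).root
    · rw [hx, h b]
    obtain ⟨c, v, hc⟩ : ∃ c v, f ⟨b, x⟩ = ⟨c, v⟩ := ⟨_, _, rfl⟩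
    have hv : v ≠ (R c).root := fun hv ↦ hx (h.eq_root_of_apply_eq_root (hv ▸ hc))
    obtain ⟨v', hv', -⟩ := exists_eq_mk_of_adj_of_ne_root hv
      (hc ▸ f.map_adj_iff.2 (adj_mk_mk_same.2 hxy))
    rw [hc, ← ih hr, hv']

theorem exists_apply_eq (h : Covers f φ) (hconn : ∀ b, (R b).graph.Preconnected) {b b' : B}
    (hb : φ b = b') (w : (R b).V) : ∃ w', f ⟨b, w⟩ = ⟨b', w'⟩ := by
  obtain rfl : (f ⟨b, w⟩).1 = b' := (h.fst_apply hconn b w).trans hb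
  exact ⟨_, rfl⟩

theorem exists_iso (h : Covers f φ) (hconn : ∀ b, (R b).graph.Preconnected) {b b' : B}
    (hb : φ b = b') : ∃ g : (R b).Iso (R b'), ∀ w, f ⟨b, w⟩ = ⟨b', g.1 w⟩ := by
  choose g hg using h.exists_apply_eq hconn hb
  choose g' hg' using h.inv.exists_apply_eq hconn (φ.symm_apply_eq.2 hb.symm)
  have left_inv : Function.LeftInverse g' g := fun w ↦ by
    refine sigma_mk_injective (β := fun b ↦ (R b).V) ((hg' (g w)).symm.trans ?_)
    rw [← hg, RelIso.inv_apply_self]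
  have right_inv : Function.RightInverse g' g := fun w ↦ by
    refine sigma_mk_injective (β := fun b ↦ (R b).V) ((hg (g' w)).symm.trans ?_)
    rw [← hg', RelIso.apply_inv_self]
  refine ⟨⟨⟨⟨g, g', left_inv, right_inv⟩, fun {w w'} ↦ ?_⟩, ?_⟩, hg⟩
  · rw [Equiv.coe_fn_mk, ← adj_mk_mk_same (base := base), ← hg, ← hg, f.map_adj_iff,
      adj_mk_mk_same]
  · subst hb
    exact sigma_mk_injective (β := fun b ↦ (R b).V) ((hg _).symm.trans (h b))

theorem mem_range_fiberAut (h : Covers f 1) (hconn : ∀ b, (R b).graph.Preconnected) :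
    f ∈ (fiberAut base R).range := by
  choose g hg using fun b ↦ h.exists_iso hconn (b := b) rfl
  exact ⟨g, RelIso.ext fun ⟨b, w⟩ ↦ (hg b w).symm⟩

end Covers

end rootedProduct

namespace ThetaV

variable {p q r : ℕ}

instance : Finite (ThetaV p q r) :=
  .of_surjective (Sum.elim (fun b : Bool ↦ cond b u v) (Sum.elim x1 (Sum.elim x2 x3))) fun
    | u => ⟨.inl true, rfl⟩
    | v => ⟨.inl false, rfl⟩
    | x1 j => ⟨.inr (.inl j), rfl⟩
    | x2 j => ⟨.inr (.inr (.inl j)), rfl⟩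
    | x3 j => ⟨.inr (.inr (.inr j)), rfl⟩

/-- The number of internal vertices of each of the three paths from `v` to `u`. -/
def innerCount (p q r : ℕ) : Fin 3 → ℕ
  | 0 => p
  | 1 => q
  | 2 => r

/-- The vertices of each of the three paths from `v` to `u`, in order from `v`. A path stays
at `u` from the index `innerCount p q r i + 1` on. -/
def strand : Fin 3 → ℕ → ThetaV p q r
  | _, 0 => v
  | 0, k + 1 => if h : k < p then x1 ⟨k, h⟩ else u
  | 1, k + 1 => if h : k < q then x2 ⟨k, h⟩ else u
  | 2, k + 1 => if h : k < r then x3 ⟨k, h⟩ else u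

theorem strand_zero (i : Fin 3) : strand (p := p) (q := q) (r := r) i 0 = v := by
  fin_cases i <;> rfl

theorem x1_eq_strand (j : Fin p) : (x1 j : ThetaV p q r) = strand 0 (j + 1) := by
  simp only [strand, j.2, dif_pos, Fin.eta]

theorem x2_eq_strand (j : Fin q) : (x2 j : ThetaV p q r) = strand 1 (j + 1) := by
  simp only [strand, j.2, dif_pos, Fin.eta]

theorem x3_eq_strand (j : Fin r) : (x3 j : ThetaV p q r) = strand 2 (j + 1) := by
  simp only [strand, j.2, dif_pos, Fin.eta]

theorem strand_innerCount_add_one (i : Fin 3) :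
    (strand i (innerCount p q r i + 1) : ThetaV p q r) = u := by
  fin_cases i <;> simp [strand, innerCount]

theorem eq_hub_or_exists_eq_strand (b : ThetaV p q r) :
    b = u ∨ b = v ∨ ∃ i, ∃ k < innerCount p q r i, b = strand i (k + 1) := by
  cases b with
  | u => exact .inl rfl
  | v => exact .inr (.inl rfl)
  | x1 j => exact .inr (.inr ⟨0, j, j.2, x1_eq_strand j⟩)
  | x2 j => exact .inr (.inr ⟨1, j, j.2, x2_eq_strand j⟩)
  | x3 j => exact .inr (.inr ⟨2, j, j.2, x3_eq_strand j⟩)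

theorem strand_eq_u_iff {i : Fin 3} {k : ℕ} :
    (strand i k : ThetaV p q r) = u ↔ innerCount p q r i < k := by
  fin_cases i <;> cases k <;> simp [strand, innerCount, Order.lt_add_one_iff]

theorem strand_ne_strand_add_two {i : Fin 3} {k : ℕ} (hk : k < innerCount p q r i) :
    (strand i k : ThetaV p q r) ≠ strand i (k + 2) := by
  fin_cases i <;> cases k <;> grind [strand, innerCount]

theorem strand_one_injective [NeZero p] [NeZero q] :
    Function.Injective fun i ↦ (strand i 1 : ThetaV p q r) := by
  have hp := NeZero.pos p
  have hq := NeZero.pos q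
  intro i j
  fin_cases i <;> fin_cases j <;> grind [strand]

theorem strand_innerCount_injective [NeZero p] [NeZero q] :
    Function.Injective fun i ↦ (strand i (innerCount p q r i) : ThetaV p q r) := by
  have hp := NeZero.pos p
  have hq := NeZero.pos q
  intro i j
  fin_cases i <;> fin_cases j <;> cases p <;> cases q <;> cases r <;> grind [strand, innerCount]

end ThetaV

namespace theta

open ThetaV

variable {p q r : ℕ}

theorem adj_strand_succ {i : Fin 3} {k : ℕ} (hk : k ≤ innerCount p q r i) :
    (theta p q r).Adj (strand i k) (strand i (k + 1)) := by
  fin_cases i <;> cases k <;> grind [strand, innerCount, theta]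

theorem eq_strand_of_adj_strand_succ {i : Fin 3} {k : ℕ} (hk : k < innerCount p q r i)
    {z : ThetaV p q r} (h : (theta p q r).Adj (strand i (k + 1)) z) :
    z = strand i k ∨ z = strand i (k + 2) := by
  fin_cases i <;> cases k <;> cases z <;> grind [strand, innerCount, theta, cases Fin]

theorem exists_eq_strand_one_of_adj_v {z : ThetaV p q r} (h : (theta p q r).Adj v z) :
    ∃ i, z = strand i 1 := by
  have hz : z = strand 0 1 ∨ z = strand 1 1 ∨ z = strand 2 1 := by
    cases z <;> grind [strand, theta, cases Fin]
  obtain hz | hz | hz := hz <;> exact ⟨_, hz⟩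

section Degrees

variable [NeZero p] [NeZero q]

theorem two_lt_ncard_neighborSet_iff {b : ThetaV p q r} :
    2 < ((theta p q r).neighborSet b).ncard ↔ b = u ∨ b = v := by
  have two_lt_ncard {c : ThetaV p q r} {n : Fin 3 → ThetaV p q r} (hn : Function.Injective n)
      (hadj : ∀ i, (theta p q r).Adj c (n i)) : 2 < ((theta p q r).neighborSet c).ncard :=
    (Set.two_lt_ncard_iff).2 ⟨n 0, n 1, n 2, hadj 0, hadj 1, hadj 2, hn.ne (by decide),
      hn.ne (by decide), hn.ne (by decide)⟩
  constructor
  · intro h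
    obtain hb | hb | ⟨i, k, hk, rfl⟩ := eq_hub_or_exists_eq_strand b
    · exact .inl hb
    · exact .inr hb
    have hsub : (theta p q r).neighborSet (strand i (k + 1)) ⊆ {strand i k, strand i (k + 2)} :=
      fun z hz ↦ eq_strand_of_adj_strand_succ hk hz
    have hle := (Set.ncard_le_ncard hsub).trans (Set.ncard_insert_le _ _)
    rw [Set.ncard_singleton] at hle
    exact absurd h hle.not_gt
  · rintro (rfl | rfl)
    · refine two_lt_ncard strand_innerCount_injective fun i ↦ ?_
      simpa only [strand_innerCount_add_one] using (adj_strand_succ (le_refl _)).symm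
    · refine two_lt_ncard strand_one_injective fun i ↦ ?_
      simpa only [strand_zero] using adj_strand_succ (p := p) (q := q) (r := r) (Nat.zero_le _)

theorem neighborSet_nontrivial (b : ThetaV p q r) : ((theta p q r).neighborSet b).Nontrivial := by
  obtain hb | hb | ⟨i, k, hk, rfl⟩ := eq_hub_or_exists_eq_strand b
  · exact (Set.one_lt_ncard_iff_nontrivial).1 (two_lt_ncard_neighborSet_iff.2 (.inl hb)).le
  · exact (Set.one_lt_ncard_iff_nontrivial).1 (two_lt_ncard_neighborSet_iff.2 (.inr hb)).le
  · exact ⟨_, (adj_strand_succ hk.le).symm, _, adj_strand_succ hk, strand_ne_strand_add_two hk⟩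

theorem apply_eq_hub (φ : theta p q r ≃g theta p q r) {b : ThetaV p q r} (hb : b = u ∨ b = v) :
    φ b = u ∨ φ b = v := by
  rw [← two_lt_ncard_neighborSet_iff] at hb ⊢
  rwa [ncard_neighborSet_apply]

end Degrees

section Automorphisms

variable {φ : theta p q r ≃g theta p q r} {i j : Fin 3}

theorem apply_strand (hv : φ v = v) (h : φ (strand i 1) = strand j 1)
    (hij : innerCount p q r i ≤ innerCount p q r j) {k : ℕ} (hk : k ≤ innerCount p q r i + 1) :
    φ (strand i k) = strand j k :=
  apply_eq_of_adj_succ φ.toHom φ.injective (fun _ ↦ adj_strand_succ)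
    (fun _ ↦ strand_ne_strand_add_two)
    (fun _ hk _ ↦ eq_strand_of_adj_strand_succ (hk.trans_le hij))
    (by rw [strand_zero, strand_zero]; exact hv) h hk

theorem innerCount_le_of_apply_strand_one (hv : φ v = v) (hu : φ u = u)
    (h : φ (strand i 1) = strand j 1) : innerCount p q r j ≤ innerCount p q r i := by
  by_contra! hlt
  have hend := apply_strand hv h hlt.le le_rfl
  rw [strand_innerCount_add_one, hu, eq_comm, strand_eq_u_iff] at hend
  lia

theorem innerCount_eq_of_apply_strand_one (hv : φ v = v) (hu : φ u = u)
    (h : φ (strand i 1) = strand j 1) : innerCount p q r i = innerCount p q r j :=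
  le_antisymm
    (innerCount_le_of_apply_strand_one (φ := φ.symm) (φ.symm_apply_eq.2 hv.symm)
      (φ.symm_apply_eq.2 hu.symm) (φ.symm_apply_eq.2 h.symm))
    (innerCount_le_of_apply_strand_one hv hu h)

theorem eq_one_of_apply_strand_one (hv : φ v = v) (hu : φ u = u)
    (h : ∀ i, φ (strand i 1) = strand i 1) : φ = 1 := by
  ext b
  obtain rfl | rfl | ⟨i, k, hk, rfl⟩ := eq_hub_or_exists_eq_strand b
  · exact hu
  · exact hv
  · exact apply_strand hv (h i) le_rfl (by lia)

end Automorphisms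

section Swap

variable {n m : ℕ}

/-- The automorphism of `theta n n m` exchanging its first two paths. -/
def swap (n m : ℕ) : theta n n m ≃g theta n n m where
  toFun
    | u => u
    | v => v
    | x1 j => x2 j
    | x2 j => x1 j
    | x3 j => x3 j
  invFun
    | u => u
    | v => v
    | x1 j => x2 j
    | x2 j => x1 j
    | x3 j => x3 j
  left_inv b := by cases b <;> rfl
  right_inv b := by cases b <;> rfl
  map_rel_iff' {a b} := by cases a <;> cases b <;> simp [theta]

theorem swap_strand (i : Fin 3) (k : ℕ) :
    swap n m (strand i k) = strand (Equiv.swap 0 1 i) k := by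
  fin_cases i <;> cases k <;>
    simp only [Fin.zero_eta, Fin.mk_one, Fin.reduceFinMk, strand, Equiv.swap_apply_left,
      Equiv.swap_apply_right, Equiv.swap_apply_of_ne_of_ne, ne_eq, Fin.reduceEq,
      not_false_eq_true] <;>
    first | rfl | (split_ifs <;> rfl)

variable {φ : theta n n m ≃g theta n n m}

theorem apply_strand_one_ne_strand_two (hv : φ v = v) (hu : φ u = u)
    (hx : m ≠ n ∨ ∃ j, ∀ k, φ (x1 j) ≠ x3 k ∧ φ (x2 j) ≠ x3 k) {i : Fin 3} (hi : i ≠ 2) :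
    φ (strand i 1) ≠ strand 2 1 := by
  intro h
  have hlen : innerCount n n m i = innerCount n n m 2 := innerCount_eq_of_apply_strand_one hv hu h
  have hi' : innerCount n n m i = n := by fin_cases i <;> first | rfl | exact absurd rfl hi
  obtain rfl : n = m := hi'.symm.trans hlen
  obtain ⟨j, hj⟩ := hx.resolve_left (not_not.2 rfl)
  have hxj : φ (strand i (j + 1)) = x3 j := by
    rw [x3_eq_strand, apply_strand hv h hlen.le (by lia)]
  fin_cases i
  · exact (hj j).1 ((congrArg φ (x1_eq_strand j)).trans hxj)
  · exact (hj j).2 ((congrArg φ (x2_eq_strand j)).trans hxj)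
  · exact hi rfl

theorem eq_one_or_mul_swap_eq_one [NeZero n] (hvu : φ v ≠ u)
    (hx : m ≠ n ∨ ∃ j, ∀ k, φ (x1 j) ≠ x3 k ∧ φ (x2 j) ≠ x3 k) : φ = 1 ∨ φ * swap n m = 1 := by
  have hv : φ v = v := (apply_eq_hub φ (.inr rfl)).resolve_left hvu
  have hu : φ u = u :=
    (apply_eq_hub φ (.inl rfl)).resolve_right fun h ↦ nomatch φ.injective (h.trans hv.symm)
  have exists_strand (i : Fin 3) : ∃ j, φ (strand i 1) = strand j 1 := by
    refine exists_eq_strand_one_of_adj_v ?_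
    rw [← hv, φ.map_adj_iff, ← strand_zero i]
    exact adj_strand_succ (Nat.zero_le _)
  choose σ hσ using exists_strand
  have hσ_inj : Function.Injective σ := fun i j hij ↦
    strand_one_injective (φ.injective ((hσ i).trans (hij ▸ (hσ j).symm)))
  have hσ_ne (i : Fin 3) (hi : i ≠ 2) : σ i ≠ 2 := fun h ↦
    apply_strand_one_ne_strand_two hv hu hx hi (h ▸ hσ i)
  have hσ_cases : (∀ i, σ i = i) ∨ ∀ i, σ (Equiv.swap 0 1 i) = i := by
    clear hσ
    decide +revert
  refine hσ_cases.imp (fun h ↦ ?_) (fun h ↦ ?_)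
  · exact eq_one_of_apply_strand_one hv hu fun i ↦ (hσ i).trans (by rw [h])
  · refine eq_one_of_apply_strand_one hv hu fun i ↦ ?_
    rw [RelIso.mul_apply, swap_strand, hσ, h]

end Swap

end theta

namespace wreathZ2

/-- Isomorphic groups have isomorphic wreath products with `Z₂`. -/
def congr {G H : Type} [Group G] [Group H] (e : G ≃* H) : wreathZ2 G ≃* wreathZ2 H :=
  SemidirectProduct.congr (e.prodCongr e) (.refl _) fun g ↦ by
    by_cases hg : g.toAdd = 1 <;> ext x <;> simp [swapHom, hg] <;> rfl

variable {A H P : Type} [Group A] [Group H] [Group P]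

/-- The homomorphism from `H × (P ≀ Z₂)` extending `ν` and sending the generator of `Z₂` to the
involution `s`. -/
def liftProd (ν : H × P × P →* A) (s : A) (hs : s * s = 1)
    (hcomm : ∀ h p q, s * ν (h, p, q) = ν (h, q, p) * s) : H × wreathZ2 P →* A :=
  .mk' (fun x ↦ ν (x.1, x.2.left) * if x.2.right.toAdd = 1 then s else 1) fun x y ↦ by
    obtain ⟨h, ⟨p, z⟩⟩ := x
    obtain ⟨h', ⟨⟨p', q'⟩, z'⟩⟩ := y
    have two_cases : ∀ z : ZMod 2, z = 0 ∨ z = 1 := by decide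
    change ν (h * h', p * swapHom P z (p', q')) * (if z.toAdd + z'.toAdd = 1 then s else 1) =
      ν (h, p) * (if z.toAdd = 1 then s else 1) *
        (ν (h', p', q') * if z'.toAdd = 1 then s else 1)
    rw [← Prod.mk_mul_mk, map_mul]
    obtain hz | hz := two_cases z.toAdd <;> obtain hz' | hz' := two_cases z'.toAdd
    · simp [swapHom, hz, hz']
    · simp [swapHom, hz, hz', mul_assoc]
    · simp [swapHom, hz, hz', mul_assoc, hcomm]
    · simp [swapHom, hz, hz', mul_assoc, ← mul_assoc s, hcomm, hs,
        show (1 + 1 : ZMod 2) = 0 from rfl]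

theorem nonempty_mulEquiv_prod (ν : H × P × P →* A) (hν : Function.Injective ν) {s : A}
    (hs : s * s = 1) (hcomm : ∀ h p q, s * ν (h, p, q) = ν (h, q, p) * s)
    (hs_mem : s ∉ ν.range) (hcover : ∀ a, a ∈ ν.range ∨ a * s ∈ ν.range) :
    Nonempty (A ≃* H × wreathZ2 P) := by
  refine ⟨(MulEquiv.ofBijective (liftProd ν s hs hcomm) ⟨?_, ?_⟩).symm⟩
  · rw [injective_iff_map_eq_one]
    rintro ⟨h, ⟨p, z⟩⟩ hx
    change ν (h, p) * (if z.toAdd = 1 then s else 1) = 1 at hx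
    split_ifs at hx with hz
    · exact absurd ⟨(h, p)⁻¹, by rw [map_inv, inv_eq_of_mul_eq_one_right hx]⟩ hs_mem
    · have hz' : z = 1 := (by decide : ∀ z : ZMod 2, z ≠ 1 → z = 0) _ hz
      rw [mul_one, map_eq_one_iff ν hν] at hx
      obtain ⟨rfl, rfl⟩ := Prod.mk.inj hx
      rw [hz']
      rfl
  · intro a
    obtain ⟨⟨h, p⟩, ha⟩ | ⟨⟨h, p⟩, ha⟩ := hcover a
    · exact ⟨(h, ⟨p, 1⟩), (mul_one _).trans ha⟩
    · exact ⟨(h, ⟨p, .ofAdd 1⟩), (congrArg (· * s) ha).trans (by rw [mul_assoc, hs, mul_one])⟩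

end wreathZ2

section SymmetricTheta

open ThetaV rootedProduct

variable {n m : ℕ} {Υ Θ : RootedGraph} {R : Fin n → RootedGraph}

/-- The rooted graphs to be attached to `theta n n m`: `Υ` and `Θ` at the hubs, `R j` at the
`j`-th internal vertex of each of the first two paths, and nothing on the third path. -/
def decoration (m : ℕ) (Υ Θ : RootedGraph) (R : Fin n → RootedGraph) : ThetaV n n m → RootedGraph
  | u => Θ
  | v => Υ
  | x1 j => R j
  | x2 j => R j
  | x3 _ => .point

/-- The theta graph with two paths carrying the same attached rooted graphs. -/
abbrev decoratedTheta (m : ℕ) (Υ Θ : RootedGraph) (R : Fin n → RootedGraph) :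
    SimpleGraph (Σ b, (decoration m Υ Θ R b).V) :=
  rootedProduct (theta n n m) (decoration m Υ Θ R)

theorem isTree_decoration (hΥ : Υ.graph.IsTree) (hΘ : Θ.graph.IsTree)
    (hR : ∀ j, (R j).graph.IsTree) (b : ThetaV n n m) : (decoration m Υ Θ R b).graph.IsTree := by
  cases b with
  | u => exact hΘ
  | v => exact hΥ
  | x1 j => exact hR j
  | x2 j => exact hR j
  | x3 j => exact .of_subsingleton (V := Unit)

/-- The rooted automorphisms of the attached graphs, collected by path. -/
def decorationAut (m : ℕ) (Υ Θ : RootedGraph) (R : Fin n → RootedGraph) :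
    (Υ.Aut × Θ.Aut) × (∀ j, (R j).Aut) × (∀ j, (R j).Aut) ≃* ∀ b, (decoration m Υ Θ R b).Aut where
  toFun g
    | u => g.1.2
    | v => g.1.1
    | x1 j => g.2.1 j
    | x2 j => g.2.2 j
    | x3 _ => 1
  invFun g := ((g v, g u), fun j ↦ g (x1 j), fun j ↦ g (x2 j))
  left_inv _ := rfl
  right_inv _ := funext fun
    | x3 _ => Subtype.ext (RelIso.ext fun _ ↦ rfl)
    | u | v | x1 _ | x2 _ => rfl
  map_mul' _ _ := funext fun
    | u | v | x1 _ | x2 _ | x3 _ => rfl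

/-- The identification of the graphs attached at `b` and at its mirror image. -/
def decorationSwap :
    ∀ b, (decoration m Υ Θ R b).graph →g (decoration m Υ Θ R (theta.swap n m b)).graph
  | u => Hom.id
  | v => Hom.id
  | x1 _ => Hom.id
  | x2 _ => Hom.id
  | x3 _ => Hom.id

theorem decorationSwap_root (b : ThetaV n n m) :
    decorationSwap b (decoration m Υ Θ R b).root =
      (decoration m Υ Θ R (theta.swap n m b)).root := by
  cases b <;> rfl

theorem mapHom_decorationSwap_leftInverse :
    Function.LeftInverse (α := Σ b, (decoration m Υ Θ R b).V)
      (mapHom (theta.swap n m).toHom decorationSwap decorationSwap_root)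
      (mapHom (theta.swap n m).toHom decorationSwap decorationSwap_root) := by
  rintro ⟨_ | _ | _ | _ | _, _⟩ <;> rfl

/-- The automorphism exchanging the first two paths along with the graphs attached to them. -/
def swapAut (m : ℕ) (Υ Θ : RootedGraph) (R : Fin n → RootedGraph) :
    decoratedTheta m Υ Θ R ≃g decoratedTheta m Υ Θ R :=
  isoOfHom (mapHom (theta.swap n m).toHom decorationSwap decorationSwap_root)
    (mapHom (theta.swap n m).toHom decorationSwap decorationSwap_root)
    mapHom_decorationSwap_leftInverse mapHom_decorationSwap_leftInverse

theorem swapAut_mul_self : swapAut m Υ Θ R * swapAut m Υ Θ R = 1 :=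
  RelIso.ext mapHom_decorationSwap_leftInverse

theorem covers_swapAut : Covers (swapAut m Υ Θ R) (theta.swap n m) := by
  rintro (_ | _ | _ | _ | _) <;> rfl

theorem swapAut_mul_fiberAut (h : Υ.Aut × Θ.Aut) (p q : ∀ j, (R j).Aut) :
    swapAut m Υ Θ R * fiberAut _ _ (decorationAut m Υ Θ R (h, p, q)) =
      fiberAut _ _ (decorationAut m Υ Θ R (h, q, p)) * swapAut m Υ Θ R := by
  ext ⟨_ | _ | _ | _ | _, _⟩ <;> rfl

theorem swapAut_notMem_range_fiberAut [NeZero n] :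
    swapAut m Υ Θ R ∉ (fiberAut (theta n n m) (decoration m Υ Θ R)).range := by
  rintro ⟨g, hg⟩
  have h := congrArg (fun f ↦ (f ⟨x1 0, (R 0).root⟩).1) hg
  exact nomatch h

theorem mem_range_or_mul_swapAut_mem_range [NeZero n] (hΥ : Υ.graph.IsTree)
    (hΘ : Θ.graph.IsTree) (hR : ∀ j, (R j).graph.IsTree) (hΥΘ : IsEmpty (Υ.Iso Θ))
    (hm : m ≠ n ∨ ∃ j, Nontrivial (R j).V)
    (f : decoratedTheta m Υ Θ R ≃g decoratedTheta m Υ Θ R) :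
    f ∈ (fiberAut (theta n n m) (decoration m Υ Θ R)).range ∨
      f * swapAut m Υ Θ R ∈ (fiberAut (theta n n m) (decoration m Υ Θ R)).range := by
  have htree := isTree_decoration (m := m) hΥ hΘ hR
  have hconn := fun b ↦ (htree b).connected.preconnected
  obtain ⟨φ, hφ⟩ := exists_covers theta.neighborSet_nontrivial htree f
  have hvu : φ v ≠ u := fun h ↦ hΥΘ.elim (hφ.exists_iso hconn h).choose
  have ne_x3 {b : ThetaV n n m} (hb : Nontrivial (decoration m Υ Θ R b).V) (k : Fin m) :
      φ b ≠ x3 k := fun h ↦ by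
    have e : (decoration m Υ Θ R b).V ≃ Unit := (hφ.exists_iso hconn h).choose.1.toEquiv
    exact not_subsingleton _ e.subsingleton
  have hx : m ≠ n ∨ ∃ j, ∀ k, φ (x1 j) ≠ x3 k ∧ φ (x2 j) ≠ x3 k :=
    hm.imp_right fun ⟨j, hj⟩ ↦ ⟨j, fun k ↦ ⟨ne_x3 (b := x1 j) hj k, ne_x3 (b := x2 j) hj k⟩⟩
  refine (theta.eq_one_or_mul_swap_eq_one hvu hx).imp (fun h ↦ ?_) (fun h ↦ ?_)
  · exact Covers.mem_range_fiberAut (h ▸ hφ) hconn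
  · exact Covers.mem_range_fiberAut (h ▸ hφ.mul covers_swapAut) hconn

theorem nonempty_aut_decoratedTheta_mulEquiv [NeZero n] (hΥ : Υ.graph.IsTree)
    (hΘ : Θ.graph.IsTree) (hR : ∀ j, (R j).graph.IsTree) (hΥΘ : IsEmpty (Υ.Iso Θ))
    (hm : m ≠ n ∨ ∃ j, Nontrivial (R j).V) :
    Nonempty ((decoratedTheta m Υ Θ R ≃g decoratedTheta m Υ Θ R) ≃*
      (Υ.Aut × Θ.Aut) × wreathZ2 (∀ j, (R j).Aut)) := by
  let ν := (fiberAut (theta n n m) _).comp (decorationAut m Υ Θ R).toMonoidHom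
  have hrange : ν.range = (fiberAut (theta n n m) _).range := by
    rw [MonoidHom.range_comp, MonoidHom.range_eq_top.2 (decorationAut m Υ Θ R).surjective,
      ← MonoidHom.range_eq_map]
  refine wreathZ2.nonempty_mulEquiv_prod ν (fiberAut_injective.comp (MulEquiv.injective _))
    swapAut_mul_self swapAut_mul_fiberAut ?_ ?_
  · exact hrange ▸ swapAut_notMem_range_fiberAut
  · exact hrange ▸ mem_range_or_mul_swapAut_mem_range hΥ hΘ hR hΥΘ hm

end SymmetricTheta

namespace attachTrees

variable {B ι : Type} {base : SimpleGraph B} {W : ι → Type} {T : ∀ i, SimpleGraph (W i)}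
  {t : ∀ i, W i} {x : ι → B} {R : B → RootedGraph}

/-- The map identifying a graph with attached trees with a rooted product, once the tree attached
at `x i` is identified with `R (x i)`. -/
def toRootedProduct (E : ∀ i, RootedGraph.Iso ⟨W i, T i, t i⟩ (R (x i))) :
    (B ⊕ Σ i, {w : W i // w ≠ t i}) → Σ b, (R b).V :=
  Sum.elim (fun b ↦ ⟨b, (R b).root⟩) fun a ↦ ⟨x a.1, (E a.1).1 a.2.1⟩

variable {E : ∀ i, RootedGraph.Iso ⟨W i, T i, t i⟩ (R (x i))}

theorem apply_ne_root {i : ι} (w : {w : W i // w ≠ t i}) : (E i).1 w.1 ≠ (R (x i)).root :=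
  fun h ↦ w.2 ((E i).1.injective (h.trans (E i).2.symm))

theorem toRootedProduct_injective (hx : Function.Injective x) :
    Function.Injective (toRootedProduct E) := by
  refine Function.Injective.sumElim (fun _ _ h ↦ congrArg Sigma.fst h) ?_ ?_
  · rintro ⟨i, w⟩ ⟨j, w'⟩ h
    obtain rfl : i = j := hx (congrArg Sigma.fst h)
    have hw : (E i).1 w.1 = (E i).1 w'.1 := sigma_mk_injective (β := fun b ↦ (R b).V) h
    rw [Subtype.ext ((E i).1.injective hw)]
  · rintro b ⟨i, w⟩ h
    obtain rfl : b = x i := congrArg Sigma.fst h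
    exact apply_ne_root w (sigma_mk_injective (β := fun b ↦ (R b).V) h).symm

theorem toRootedProduct_surjective (hR : ∀ b ∉ Set.range x, Subsingleton (R b).V) :
    Function.Surjective (toRootedProduct E) := by
  rintro ⟨b, w⟩
  by_cases hw : w = (R b).root
  · exact ⟨.inl b, by rw [hw]; rfl⟩
  · obtain ⟨i, rfl⟩ : b ∈ Set.range x := by
      by_contra hb
      exact hw ((hR b hb).elim _ _)
    refine ⟨.inr ⟨i, (E i).1.symm w, fun h ↦ hw ?_⟩, ?_⟩
    · exact ((E i).1.symm_apply_eq.1 h).trans (E i).2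
    · exact congrArg (Sigma.mk (x i)) ((E i).1.apply_symm_apply w)

theorem adj_root_toRootedProduct {b : B} {i : ι} (w : {w : W i // w ≠ t i}) :
    (rootedProduct base R).Adj ⟨b, (R b).root⟩ ⟨x i, (E i).1 w.1⟩ ↔
      b = x i ∧ (T i).Adj (t i) w.1 := by
  by_cases hb : b = x i
  · subst hb
    have hadj : (R (x i)).graph.Adj ((E i).1 (t i)) ((E i).1 w.1) ↔ (T i).Adj (t i) w.1 :=
      (E i).1.map_adj_iff
    rw [(E i).2] at hadj
    rw [rootedProduct.adj_mk_mk_same, hadj]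
    exact (and_iff_right rfl).symm
  · simp [rootedProduct.adj_mk_mk_of_ne hb, hb, apply_ne_root w]

theorem adj_toRootedProduct (hx : Function.Injective x) (a b : B ⊕ Σ i, {w : W i // w ≠ t i}) :
    (rootedProduct base R).Adj (toRootedProduct E a) (toRootedProduct E b) ↔
      (attachTrees base T t x).Adj a b := by
  rcases a with a | ⟨i, w⟩ <;> rcases b with b | ⟨j, w'⟩
  · exact rootedProduct.adj_root_root
  · exact adj_root_toRootedProduct w'
  · exact ((rootedProduct base R).adj_comm _ _).trans (adj_root_toRootedProduct w)
  · change (rootedProduct base R).Adj ⟨x i, (E i).1 w.1⟩ ⟨x j, (E j).1 w'.1⟩ ↔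
      ∃ h : i = j, (T j).Adj (h ▸ w).1 w'.1
    by_cases hij : i = j
    · subst hij
      rw [rootedProduct.adj_mk_mk_same, (E i).1.map_adj_iff]
      exact ⟨fun h ↦ ⟨rfl, h⟩, fun ⟨_, h⟩ ↦ h⟩
    · simp [rootedProduct.adj_mk_mk_of_ne (hx.ne hij), hij, apply_ne_root w]

/-- Attaching trees at distinct vertices is a rooted product with trivial fibers at the
remaining vertices. -/
noncomputable def isoRootedProduct (base : SimpleGraph B)
    (E : ∀ i, RootedGraph.Iso ⟨W i, T i, t i⟩ (R (x i))) (hx : Function.Injective x)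
    (hR : ∀ b ∉ Set.range x, Subsingleton (R b).V) :
    attachTrees base T t x ≃g rootedProduct base R where
  toEquiv := .ofBijective (toRootedProduct E)
    ⟨toRootedProduct_injective hx, toRootedProduct_surjective hR⟩
  map_rel_iff' := adj_toRootedProduct hx _ _

end attachTrees

theorem stmt6x_injective (m : ℕ) : Function.Injective (stmt6x m) := by
  rintro ((i | i) | (_ | _)) ((j | j) | (_ | _)) h <;> cases h <;> rfl

/-- A product indexed by `Fin 3`, written out. -/
def piFinThreeMulEquiv (G : Fin 3 → Type) [∀ j, Group (G j)] :
    (∀ j, G j) ≃* G 0 × G 1 × G 2 where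
  toFun g := (g 0, g 1, g 2)
  invFun g := Fin.cons g.1 (Fin.cons g.2.1 (Fin.cons g.2.2 finZeroElim))
  left_inv g := by ext j; fin_cases j <;> rfl
  right_inv _ := rfl
  map_mul' _ _ := rfl

theorem nonempty_stmt6Graph_iso_decoratedTheta (m : ℕ) {WT WΛ : Fin 3 → Type} {WΥ WΘ : Type}
    (TT : ∀ j, SimpleGraph (WT j)) (TΛ : ∀ j, SimpleGraph (WΛ j))
    (TΥ : SimpleGraph WΥ) (TΘ : SimpleGraph WΘ)
    (tT : ∀ j, WT j) (tΛ : ∀ j, WΛ j) (tΥ : WΥ) (tΘ : WΘ)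
    (hiso : ∀ j, ∃ e : TT j ≃g TΛ j, e (tT j) = tΛ j) :
    Nonempty (stmt6Graph m TT TΛ TΥ TΘ tT tΛ tΥ tΘ ≃g
      decoratedTheta m ⟨WΥ, TΥ, tΥ⟩ ⟨WΘ, TΘ, tΘ⟩ fun j ↦ ⟨WT j, TT j, tT j⟩) := by
  choose e he using hiso
  refine ⟨attachTrees.isoRootedProduct _ (fun i ↦ ?_) (stmt6x_injective m) ?_⟩
  · exact match i with
      | .inl (.inl j) => ⟨.refl, rfl⟩
      | .inl (.inr j) => ⟨(e j).symm, (e j).symm_apply_eq.2 (he j).symm⟩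
      | .inr (.inl _) => ⟨.refl, rfl⟩
      | .inr (.inr _) => ⟨.refl, rfl⟩
  · rintro (_ | _ | j | j | j) hb
    · exact absurd ⟨.inr (.inr ()), rfl⟩ hb
    · exact absurd ⟨.inr (.inl ()), rfl⟩ hb
    · exact absurd ⟨.inl (.inl j), rfl⟩ hb
    · exact absurd ⟨.inl (.inr j), rfl⟩ hb
    · exact inferInstanceAs (Subsingleton Unit)

theorem aut_bicyclic_link_type_general
    (m : ℕ) {WT WΛ : Fin 3 → Type} {WΥ WΘ : Type}
    (TT : ∀ j, SimpleGraph (WT j)) (TΛ : ∀ j, SimpleGraph (WΛ j))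
    (TΥ : SimpleGraph WΥ) (TΘ : SimpleGraph WΘ)
    (tT : ∀ j, WT j) (tΛ : ∀ j, WΛ j) (tΥ : WΥ) (tΘ : WΘ)
    (hTtree : ∀ j, (TT j).IsTree) (hΥtree : TΥ.IsTree) (hΘtree : TΘ.IsTree)
    (hiso : ∀ j, ∃ e : TT j ≃g TΛ j, e (tT j) = tΛ j)
    (hne : ∀ e : TΥ ≃g TΘ, e tΥ ≠ tΘ)
    (hside : m + 1 ≠ 4 ∨ Nontrivial (WT 0) ∨ Nontrivial (WT 1) ∨ Nontrivial (WT 2)) :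
    Nonempty ((stmt6Graph m TT TΛ TΥ TΘ tT tΛ tΥ tΘ ≃g
        stmt6Graph m TT TΛ TΥ TΘ tT tΛ tΥ tΘ) ≃*
      ↥(autStab TΥ tΥ) × ↥(autStab TΘ tΘ) ×
        wreathZ2 (↥(autStab (TT 0) (tT 0)) × ↥(autStab (TT 1) (tT 1)) ×
          ↥(autStab (TT 2) (tT 2)))) := by
  obtain ⟨e⟩ := nonempty_stmt6Graph_iso_decoratedTheta m TT TΛ TΥ TΘ tT tΛ tΥ tΘ hiso
  have hm : m ≠ 3 ∨ ∃ j, Nontrivial (WT j) :=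
    hside.imp (by lia) fun h ↦ by simpa [Fin.exists_fin_succ] using h
  obtain ⟨ψ⟩ := nonempty_aut_decoratedTheta_mulEquiv (m := m) (Υ := ⟨WΥ, TΥ, tΥ⟩)
    (Θ := ⟨WΘ, TΘ, tΘ⟩) (R := fun j ↦ ⟨WT j, TT j, tT j⟩) hΥtree hΘtree hTtree
    ⟨fun e ↦ hne e.1 e.2⟩ hm
  have χ := wreathZ2.congr (piFinThreeMulEquiv fun j ↦ ↥(autStab (TT j) (tT j)))
  exact ⟨(autCongr e).trans <| ψ.trans <| MulEquiv.prodAssoc.trans <|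
    .prodCongr (.refl _) (.prodCongr (.refl _) χ)⟩

/-- Lemma 2.6. With `T_i ≅ Λ_i` as rooted trees for `i = 1, 2, 3`,
`Υ ≇ Θ` as rooted trees, and `ℓ ≠ 4` or some `T_i` nontrivial, the automorphism group of
`Δ` is `H × K × ((G₁ × G₂ × G₃) ≀ Z₂)` where `G_i = Aut(T_i)_root`, `H = Aut(Υ)_root` and
`K = Aut(Θ)_root`. -/
theorem aut_bicyclic_link_type
    (m : ℕ) {WT WΛ : Fin 3 → Type} {WΥ WΘ : Type}
    [∀ j, Fintype (WT j)] [∀ j, Fintype (WΛ j)] [Fintype WΥ] [Fintype WΘ]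
    (TT : ∀ j, SimpleGraph (WT j)) (TΛ : ∀ j, SimpleGraph (WΛ j))
    (TΥ : SimpleGraph WΥ) (TΘ : SimpleGraph WΘ)
    (tT : ∀ j, WT j) (tΛ : ∀ j, WΛ j) (tΥ : WΥ) (tΘ : WΘ)
    (hTtree : ∀ j, (TT j).IsTree) (hΛtree : ∀ j, (TΛ j).IsTree)
    (hΥtree : TΥ.IsTree) (hΘtree : TΘ.IsTree)
    (hiso : ∀ j, ∃ e : TT j ≃g TΛ j, e (tT j) = tΛ j)
    (hne : ∀ e : TΥ ≃g TΘ, e tΥ ≠ tΘ)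
    (hside : m + 1 ≠ 4 ∨ Nontrivial (WT 0) ∨ Nontrivial (WT 1) ∨ Nontrivial (WT 2)) :
    Nonempty ((stmt6Graph m TT TΛ TΥ TΘ tT tΛ tΥ tΘ ≃g
        stmt6Graph m TT TΛ TΥ TΘ tT tΛ tΥ tΘ) ≃*
      ↥(autStab TΥ tΥ) × ↥(autStab TΘ tΘ) ×
        wreathZ2 (↥(autStab (TT 0) (tT 0)) × ↥(autStab (TT 1) (tT 1)) ×
          ↥(autStab (TT 2) (tT 2)))) := by
  exact aut_bicyclic_link_type_general m TT TΛ TΥ TΘ tT tΛ tΥ tΘ hTtree hΥtree hΘtree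
    hiso hne hside
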